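/- With b := min{2/(2γ₁² + c₁ + 1), 1/(2c₁), 1/(γ₁c₁)} and ω := b/(2 + c₁bγ₁), the energy E(t) := ‖Bv(t)‖² + γ²‖v'(t)‖² satisfies, for all t ∈ [0,T], the decay estimate E(t) ≤ (b/ω)·e^{−ωt}·E(0) + ((b+2)/(bω))·(1 − e^{−ωt})·sup{‖f(s)‖² : s ∈ [0,t]}. The constants b and ω depend only on c₁ and γ₁ and not on γ ∈ (0,γ₁]. -/

import Mathlib

open Set RealInnerProductSpace

/-!
The energy alone is only seen to dissipate `‖v'‖²`. Adding the small cross term `b γ² ⟪v, v'⟫`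
gives a modified energy whose derivative along a solution also contains `-b ‖B v‖²`, so that it is
at most `-(b / 2) E` up to a multiple of `‖f‖²`. For `b` as small as required, twice the modified
energy lies between `E` and `(b / ω) E`, and Grönwall's inequality with the negative rate `-ω`
yields the decay estimate.
-/

section Gronwall

variable {g g' : ℝ → ℝ} {K ε a b : ℝ}

theorem le_gronwallBound_of_hasDerivWithinAt_Icc
    (hg : ∀ x ∈ Icc a b, HasDerivWithinAt g (g' x) (Icc a b) x)
    (bound : ∀ x ∈ Ico a b, g' x ≤ K * g x + ε) :
    ∀ x ∈ Icc a b, g x ≤ gronwallBound (g a) K ε (x - a) := by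
  have hright : ∀ x ∈ Ico a b, HasDerivWithinAt g (g' x) (Ici x) x := fun x hx =>
    (hg x (Ico_subset_Icc_self hx)).mono_of_mem_nhdsWithin (Icc_mem_nhdsGE_of_mem hx)
  exact le_gronwallBound_of_liminf_deriv_right_le (HasDerivWithinAt.continuousOn hg)
    (fun x hx r hr => (hright x hx).liminf_right_slope_le hr) le_rfl bound

end Gronwall

section DampedWave

variable {V W : Type*} [NormedAddCommGroup V] [InnerProductSpace ℝ V]
  [NormedAddCommGroup W] [InnerProductSpace ℝ W]

theorem two_mul_real_inner_le_add_mul_norm_sq {ε : ℝ} (hε : 0 < ε) (x y : V) :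
    2 * ⟪x, y⟫ ≤ ε * ‖x‖ ^ 2 + ε⁻¹ * ‖y‖ ^ 2 :=
  calc 2 * ⟪x, y⟫ ≤ 2 * (‖x‖ * ‖y‖) := by gcongr; exact real_inner_le_norm x y
    _ = 2 * ‖x‖ * ‖y‖ := by ring
    _ ≤ ε * ‖x‖ ^ 2 + ε⁻¹ * ‖y‖ ^ 2 := two_mul_le_add_mul_sq hε

/-- Energy of the damped wave equation in the state with position `x` and velocity `y`. -/
def waveEnergy (B : V →L[ℝ] W) (γ : ℝ) (x y : V) : ℝ :=
  ‖B x‖ ^ 2 + γ ^ 2 * ‖y‖ ^ 2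

/-- Lyapunov function of the damped wave equation: the energy perturbed by a cross term between
position `x` and velocity `y`, with weight `b`. -/
def modifiedWaveEnergy (B : V →L[ℝ] W) (γ b : ℝ) (x y : V) : ℝ :=
  waveEnergy B γ x y + b * γ ^ 2 * ⟪x, y⟫

/-- Time derivative of the modified energy along a solution of the damped wave equation, in the
state with position `x` and velocity `y` under the forcing `w`; the acceleration has been
eliminated by means of the equation. -/
def modifiedWaveEnergyRate (B : V →L[ℝ] W) (γ b : ℝ) (x y w : V) : ℝ :=
  2 * ⟪w, y⟫ - 2 * ‖y‖ ^ 2 + b * (γ ^ 2 * ‖y‖ ^ 2 + ⟪w, x⟫ - ⟪y, x⟫ - ‖B x‖ ^ 2)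

/-- `v` solves the damped wave equation `γ² v'' + v' + B* B v = f` on the set `s` of times, with
`v'` and `v''` its first two derivatives within `s`. The equation is tested against vectors of `V`,
so that it makes sense without a bounded adjoint `B*`. -/
structure IsDampedWaveOn (B : V →L[ℝ] W) (γ : ℝ) (f v v' v'' : ℝ → V) (s : Set ℝ) : Prop where
  hasDerivWithinAt : ∀ t ∈ s, HasDerivWithinAt v (v' t) s t
  hasDerivWithinAt_velocity : ∀ t ∈ s, HasDerivWithinAt v' (v'' t) s t
  weak_eq : ∀ t ∈ s, ∀ x : V,
    γ ^ 2 * ⟪v'' t, x⟫ + ⟪v' t, x⟫ + ⟪B (v t), B x⟫ = ⟪f t, x⟫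

variable {B : V →L[ℝ] W} {γ b c ω : ℝ} {f v v' v'' : ℝ → V} {s : Set ℝ}

theorem IsDampedWaveOn.mono {r : Set ℝ} (h : IsDampedWaveOn B γ f v v' v'' s) (hrs : r ⊆ s) :
    IsDampedWaveOn B γ f v v' v'' r where
  hasDerivWithinAt t ht := (h.hasDerivWithinAt t (hrs ht)).mono hrs
  hasDerivWithinAt_velocity t ht := (h.hasDerivWithinAt_velocity t (hrs ht)).mono hrs
  weak_eq t ht := h.weak_eq t (hrs ht)

theorem isDampedWaveOn_of_symmetric {B : V →L[ℝ] V} (hB : ∀ x y : V, ⟪B x, y⟫ = ⟪x, B y⟫)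
    (hv : ∀ t ∈ s, HasDerivWithinAt v (v' t) s t)
    (hv' : ∀ t ∈ s, HasDerivWithinAt v' (v'' t) s t)
    (heq : ∀ t ∈ s, γ ^ 2 • v'' t + v' t + B (B (v t)) = f t) :
    IsDampedWaveOn B γ f v v' v'' s where
  hasDerivWithinAt := hv
  hasDerivWithinAt_velocity := hv'
  weak_eq t ht x := by
    rw [← heq t ht, inner_add_left, inner_add_left, real_inner_smul_left, hB (B (v t))]

theorem waveEnergy_nonneg (B : V →L[ℝ] W) (γ : ℝ) (x y : V) : 0 ≤ waveEnergy B γ x y := by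
  unfold waveEnergy
  positivity

theorem IsDampedWaveOn.hasDerivWithinAt_modifiedWaveEnergy (h : IsDampedWaveOn B γ f v v' v'' s)
    (b : ℝ) {t : ℝ} (ht : t ∈ s) :
    HasDerivWithinAt (fun r => modifiedWaveEnergy B γ b (v r) (v' r))
      (modifiedWaveEnergyRate B γ b (v t) (v' t) (f t)) s t := by
  have hv := h.hasDerivWithinAt t ht
  have hv' := h.hasDerivWithinAt_velocity t ht
  have hBv : HasDerivWithinAt (fun r => B (v r)) (B (v' t)) s t :=
    B.hasFDerivAt.comp_hasDerivWithinAt t hv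
  refine ((hBv.norm_sq.add (hv'.norm_sq.const_mul (γ ^ 2))).add
    ((hv.inner ℝ hv').const_mul (b * γ ^ 2))).congr_deriv ?_
  have test_velocity := h.weak_eq t ht (v' t)
  have test_position := h.weak_eq t ht (v t)
  rw [real_inner_self_eq_norm_sq] at test_velocity test_position
  rw [modifiedWaveEnergyRate, real_inner_self_eq_norm_sq, real_inner_comm (v'' t) (v' t),
    real_inner_comm (v'' t) (v t)]
  linear_combination 2 * test_velocity + b * test_position

theorem abs_mul_inner_le_waveEnergy (hc : 1 ≤ c) (hB : ∀ z : V, ‖z‖ ^ 2 ≤ c * ‖B z‖ ^ 2)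
    (x y : V) : |γ * ⟪x, y⟫| ≤ c / 2 * waveEnergy B γ x y := by
  have young (σ : ℝ) (hσ : σ ^ 2 = γ ^ 2) : 2 * (σ * ⟪x, y⟫) ≤ c * waveEnergy B γ x y :=
    calc 2 * (σ * ⟪x, y⟫) = 2 * ⟪x, σ • y⟫ := by rw [real_inner_smul_right]
      _ ≤ 1 * ‖x‖ ^ 2 + 1⁻¹ * ‖σ • y‖ ^ 2 := two_mul_real_inner_le_add_mul_norm_sq one_pos x _
      _ = ‖x‖ ^ 2 + 1 * (γ ^ 2 * ‖y‖ ^ 2) := by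
        rw [norm_smul, mul_pow, Real.norm_eq_abs, sq_abs, hσ]; ring
      _ ≤ c * ‖B x‖ ^ 2 + c * (γ ^ 2 * ‖y‖ ^ 2) := by gcongr; exact hB x
      _ = c * waveEnergy B γ x y := by unfold waveEnergy; ring
  have upper := young γ rfl
  have lower := young (-γ) (neg_sq γ)
  exact abs_le.2 ⟨by linarith, by linarith⟩

theorem abs_modifiedWaveEnergy_sub_waveEnergy_le (hc : 1 ≤ c)
    (hB : ∀ z : V, ‖z‖ ^ 2 ≤ c * ‖B z‖ ^ 2) (hb : 0 ≤ b) (hγ : 0 ≤ γ) (x y : V) :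
    |modifiedWaveEnergy B γ b x y - waveEnergy B γ x y| ≤
      c * b * γ / 2 * waveEnergy B γ x y :=
  calc |modifiedWaveEnergy B γ b x y - waveEnergy B γ x y| = |b * γ * (γ * ⟪x, y⟫)| := by
        unfold modifiedWaveEnergy; ring_nf
    _ = b * γ * |γ * ⟪x, y⟫| := by rw [abs_mul, abs_of_nonneg (mul_nonneg hb hγ)]
    _ ≤ b * γ * (c / 2 * waveEnergy B γ x y) := by
        gcongr; exact abs_mul_inner_le_waveEnergy hc hB x y
    _ = c * b * γ / 2 * waveEnergy B γ x y := by ring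

theorem waveEnergy_le_two_mul_modifiedWaveEnergy (hc : 1 ≤ c)
    (hB : ∀ z : V, ‖z‖ ^ 2 ≤ c * ‖B z‖ ^ 2) (hb : 0 ≤ b) (hγ : 0 ≤ γ) (hbγ : c * b * γ ≤ 1)
    (x y : V) : waveEnergy B γ x y ≤ 2 * modifiedWaveEnergy B γ b x y := by
  have hcross := (abs_le.1 (abs_modifiedWaveEnergy_sub_waveEnergy_le hc hB hb hγ x y)).1
  have hsmall := mul_le_mul_of_nonneg_right hbγ (waveEnergy_nonneg B γ x y)
  linarith

theorem two_mul_modifiedWaveEnergy_le (hc : 1 ≤ c) (hB : ∀ z : V, ‖z‖ ^ 2 ≤ c * ‖B z‖ ^ 2)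
    (hb : 0 ≤ b) (hγ : 0 ≤ γ) (x y : V) :
    2 * modifiedWaveEnergy B γ b x y ≤ (2 + c * b * γ) * waveEnergy B γ x y := by
  have hcross := (abs_le.1 (abs_modifiedWaveEnergy_sub_waveEnergy_le hc hB hb hγ x y)).2
  linarith

theorem modifiedWaveEnergyRate_le (hc : 1 ≤ c) (hB : ∀ z : V, ‖z‖ ^ 2 ≤ c * ‖B z‖ ^ 2)
    (hb : 0 < b) (hbγ : b * (2 * γ ^ 2 + c + 1) ≤ 2) (hbc : b * (2 * c) ≤ 1) (x y w : V) :
    modifiedWaveEnergyRate B γ b x y w ≤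
      -(b / 2) * waveEnergy B γ x y + (1 / 2 + 1 / b) * ‖w‖ ^ 2 := by
  have hc0 : 0 < c := one_pos.trans_le hc
  have position_term : 2 * (⟪w, x⟫ - ⟪y, x⟫) ≤
      ‖B x‖ ^ 2 + c * (‖w‖ ^ 2 - 2 * ⟪w, y⟫ + ‖y‖ ^ 2) :=
    calc 2 * (⟪w, x⟫ - ⟪y, x⟫) = 2 * ⟪w - y, x⟫ := by rw [inner_sub_left]
      _ ≤ c * ‖w - y‖ ^ 2 + c⁻¹ * ‖x‖ ^ 2 := two_mul_real_inner_le_add_mul_norm_sq hc0 _ x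
      _ ≤ c * ‖w - y‖ ^ 2 + ‖B x‖ ^ 2 := by gcongr; exact (inv_mul_le_iff₀ hc0).2 (hB x)
      _ = ‖B x‖ ^ 2 + c * (‖w‖ ^ 2 - 2 * ⟪w, y⟫ + ‖y‖ ^ 2) := by
        rw [norm_sub_sq_real]; ring
  have velocity_term : 2 * ⟪w, y⟫ ≤ 2 * ‖w‖ ^ 2 + 2⁻¹ * ‖y‖ ^ 2 :=
    two_mul_real_inner_le_add_mul_norm_sq two_pos w y
  have two_le_inv : 2 ≤ 1 / b := (le_div_iff₀ hb).2 (by nlinarith)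
  have velocity_coeff : 0 ≤ (3 / 2 - b * c / 4 - 3 / 2 * (b * γ ^ 2)) * ‖y‖ ^ 2 :=
    mul_nonneg (by nlinarith) (sq_nonneg _)
  have forcing_coeff : 0 ≤ (1 / b - 3 / 2 + b * c / 2) * ‖w‖ ^ 2 :=
    mul_nonneg (by nlinarith) (sq_nonneg _)
  have position_scaled := mul_le_mul_of_nonneg_left position_term hb.le
  have velocity_scaled := mul_le_mul_of_nonneg_left velocity_term
    (by linarith : 0 ≤ 1 - b * c / 2)
  unfold modifiedWaveEnergyRate waveEnergy
  linarith

theorem modifiedWaveEnergyRate_le_neg_mul (hc : 1 ≤ c) (hB : ∀ z : V, ‖z‖ ^ 2 ≤ c * ‖B z‖ ^ 2)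
    (hb : 0 < b) (hγ : 0 ≤ γ) (hbγ : b * (2 * γ ^ 2 + c + 1) ≤ 2) (hbc : b * (2 * c) ≤ 1)
    (hω : 0 ≤ ω) (hωb : ω * (2 + c * b * γ) ≤ b) (x y w : V) :
    modifiedWaveEnergyRate B γ b x y w ≤
      -ω * modifiedWaveEnergy B γ b x y + (1 / 2 + 1 / b) * ‖w‖ ^ 2 := by
  have hrate := modifiedWaveEnergyRate_le hc hB hb hbγ hbc x y w
  have hcompare : ω * (2 * modifiedWaveEnergy B γ b x y) ≤ b * waveEnergy B γ x y :=
    calc ω * (2 * modifiedWaveEnergy B γ b x y)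
        ≤ ω * ((2 + c * b * γ) * waveEnergy B γ x y) :=
          mul_le_mul_of_nonneg_left (two_mul_modifiedWaveEnergy_le hc hB hb.le hγ x y) hω
      _ = ω * (2 + c * b * γ) * waveEnergy B γ x y := by ring
      _ ≤ b * waveEnergy B γ x y := by gcongr; exact waveEnergy_nonneg B γ x y
  linarith

theorem IsDampedWaveOn.modifiedWaveEnergy_le {t F : ℝ} (ht : 0 ≤ t)
    (h : IsDampedWaveOn B γ f v v' v'' (Icc 0 t)) (hF : ∀ r ∈ Icc 0 t, ‖f r‖ ^ 2 ≤ F)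
    (hc : 1 ≤ c) (hB : ∀ z : V, ‖z‖ ^ 2 ≤ c * ‖B z‖ ^ 2)
    (hb : 0 < b) (hγ : 0 ≤ γ) (hbγ : b * (2 * γ ^ 2 + c + 1) ≤ 2) (hbc : b * (2 * c) ≤ 1)
    (hω : 0 < ω) (hωb : ω * (2 + c * b * γ) ≤ b) :
    modifiedWaveEnergy B γ b (v t) (v' t) ≤
      Real.exp (-ω * t) * modifiedWaveEnergy B γ b (v 0) (v' 0) +
        (1 / 2 + 1 / b) / ω * (1 - Real.exp (-ω * t)) * F := by
  have hgronwall := le_gronwallBound_of_hasDerivWithinAt_Icc (K := -ω) (ε := (1 / 2 + 1 / b) * F)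
    (fun r hr => h.hasDerivWithinAt_modifiedWaveEnergy b hr)
    (fun r hr => (modifiedWaveEnergyRate_le_neg_mul hc hB hb hγ hbγ hbc hω.le hωb _ _ _).trans
      (by gcongr; exact hF r (Ico_subset_Icc_self hr)))
    t (right_mem_Icc.2 ht)
  rw [gronwallBound_of_K_ne_0 (neg_ne_zero.2 hω.ne')] at hgronwall
  refine hgronwall.trans_eq ?_
  rw [sub_zero, div_neg]
  ring

theorem IsDampedWaveOn.waveEnergy_le {t F : ℝ} (ht : 0 ≤ t)
    (h : IsDampedWaveOn B γ f v v' v'' (Icc 0 t)) (hF : ∀ r ∈ Icc 0 t, ‖f r‖ ^ 2 ≤ F)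
    (hc : 1 ≤ c) (hB : ∀ z : V, ‖z‖ ^ 2 ≤ c * ‖B z‖ ^ 2)
    (hb : 0 < b) (hγ : 0 ≤ γ) (hbγ : b * (2 * γ ^ 2 + c + 1) ≤ 2) (hbc : b * (2 * c) ≤ 1)
    (hcbγ : c * b * γ ≤ 1) (hω : 0 < ω) (hωb : ω * (2 + c * b * γ) ≤ b) :
    waveEnergy B γ (v t) (v' t) ≤
      b / ω * Real.exp (-ω * t) * waveEnergy B γ (v 0) (v' 0) +
        (b + 2) / (b * ω) * (1 - Real.exp (-ω * t)) * F := by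
  have hinitial : 2 * modifiedWaveEnergy B γ b (v 0) (v' 0) ≤
      b / ω * waveEnergy B γ (v 0) (v' 0) := by
    refine (two_mul_modifiedWaveEnergy_le hc hB hb.le hγ _ _).trans ?_
    gcongr
    · exact waveEnergy_nonneg B γ _ _
    · rwa [le_div_iff₀' hω]
  calc waveEnergy B γ (v t) (v' t)
      ≤ 2 * modifiedWaveEnergy B γ b (v t) (v' t) :=
        waveEnergy_le_two_mul_modifiedWaveEnergy hc hB hb.le hγ hcbγ _ _
    _ ≤ 2 * (Real.exp (-ω * t) * modifiedWaveEnergy B γ b (v 0) (v' 0) +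
          (1 / 2 + 1 / b) / ω * (1 - Real.exp (-ω * t)) * F) := by
        gcongr; exact h.modifiedWaveEnergy_le ht hF hc hB hb hγ hbγ hbc hω hωb
    _ = Real.exp (-ω * t) * (2 * modifiedWaveEnergy B γ b (v 0) (v' 0)) +
          (b + 2) / (b * ω) * (1 - Real.exp (-ω * t)) * F := by field_simp
    _ ≤ Real.exp (-ω * t) * (b / ω * waveEnergy B γ (v 0) (v' 0)) +
          (b + 2) / (b * ω) * (1 - Real.exp (-ω * t)) * F := by gcongr
    _ = b / ω * Real.exp (-ω * t) * waveEnergy B γ (v 0) (v' 0) +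
          (b + 2) / (b * ω) * (1 - Real.exp (-ω * t)) * F := by ring

theorem stmt9_general {γ₁ T : ℝ} (hc : 1 ≤ c) (hB : ∀ z : V, ‖z‖ ^ 2 ≤ c * ‖B z‖ ^ 2)
    (hγ₁ : 0 < γ₁) (hγ : γ ∈ Icc 0 γ₁)
    (hf : BddAbove ((fun s => ‖f s‖ ^ 2) '' Icc 0 T))
    (h : IsDampedWaveOn B γ f v v' v'' (Icc 0 T))
    (hb : b = min (2 / (2 * γ₁ ^ 2 + c + 1)) (min (1 / (2 * c)) (1 / (γ₁ * c))))
    (hω : ω = b / (2 + c * b * γ₁)) :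
    ∀ t ∈ Icc 0 T,
      waveEnergy B γ (v t) (v' t) ≤
        (b / ω) * Real.exp (-ω * t) * waveEnergy B γ (v 0) (v' 0) +
          ((b + 2) / (b * ω)) * (1 - Real.exp (-ω * t)) *
            sSup ((fun s => ‖f s‖ ^ 2) '' Icc 0 t) := by
  rintro t ⟨ht0, htT⟩
  obtain ⟨hγ0, hγγ₁⟩ := hγ
  have hb0 : 0 < b := by rw [hb]; positivity
  obtain ⟨hb_damping, hb_coercive, hb_cross⟩ :
      b * (2 * γ₁ ^ 2 + c + 1) ≤ 2 ∧ b * (2 * c) ≤ 1 ∧ b * (γ₁ * c) ≤ 1 := by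
    simpa only [le_min_iff, le_div_iff₀ (by positivity : 0 < 2 * γ₁ ^ 2 + c + 1),
      le_div_iff₀ (by positivity : 0 < 2 * c), le_div_iff₀ (by positivity : 0 < γ₁ * c)]
      using hb.le
  have hω0 : 0 < ω := by rw [hω]; positivity
  have hsub : Icc 0 t ⊆ Icc 0 T := Icc_subset_Icc_right htT
  have hcbγ : c * b * γ ≤ c * b * γ₁ := by gcongr
  refine (h.mono hsub).waveEnergy_le ht0
    (fun r hr => le_csSup (hf.mono (image_mono hsub)) (mem_image_of_mem _ hr))
    hc hB hb0 hγ0 (le_trans (by gcongr) hb_damping) hb_coercive (by linarith) hω0 ?_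
  calc ω * (2 + c * b * γ) ≤ ω * (2 + c * b * γ₁) := by gcongr
    _ = b := by rw [hω]; field_simp

end DampedWave

/-- With `b := min{2/(2γ₁² + c₁ + 1), 1/(2c₁), 1/(γ₁c₁)}` and
`ω := b/(2 + c₁bγ₁)` (constants depending only on `c₁` and `γ₁`, not on `γ ∈ (0,γ₁]`),
the energy `E(t) := ‖Bv(t)‖² + γ²‖v'(t)‖²` satisfies, for all `t ∈ [0,T]`,
`E(t) ≤ (b/ω)·e^{−ωt}·E(0) + ((b+2)/(bω))·(1 − e^{−ωt})·sup{‖f(s)‖² : s ∈ [0,t]}`. -/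
theorem stmt9
    {H : Type*} [NormedAddCommGroup H] [InnerProductSpace ℝ H] [CompleteSpace H]
    (B : H →L[ℝ] H) (hBsym : ∀ x y : H, ⟪B x, y⟫ = ⟪x, B y⟫)
    (c₁ : ℝ) (hc₁ : 1 ≤ c₁) (hB : ∀ z : H, ‖z‖ ^ 2 ≤ c₁ * ‖B z‖ ^ 2)
    (γ₁ γ T : ℝ) (hγ₁ : 0 < γ₁) (hγ : γ ∈ Ioc 0 γ₁) (hT : 0 < T)
    (f v v' v'' : ℝ → H)
    (hf : ContinuousOn f (Icc (0 : ℝ) T))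
    (hv : ∀ t ∈ Icc (0 : ℝ) T, HasDerivWithinAt v (v' t) (Icc (0 : ℝ) T) t)
    (hv' : ∀ t ∈ Icc (0 : ℝ) T, HasDerivWithinAt v' (v'' t) (Icc (0 : ℝ) T) t)
    (hv'' : ContinuousOn v'' (Icc (0 : ℝ) T))
    (heq : ∀ t ∈ Icc (0 : ℝ) T, γ ^ 2 • v'' t + v' t + B (B (v t)) = f t)
    (b ω : ℝ)
    (hb : b = min (2 / (2 * γ₁ ^ 2 + c₁ + 1)) (min (1 / (2 * c₁)) (1 / (γ₁ * c₁))))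
    (hω : ω = b / (2 + c₁ * b * γ₁))
    (E : ℝ → ℝ)
    (hE : E = fun t => ‖B (v t)‖ ^ 2 + γ ^ 2 * ‖v' t‖ ^ 2) :
    ∀ t ∈ Icc (0 : ℝ) T,
      E t ≤ (b / ω) * Real.exp (-ω * t) * E 0 +
        ((b + 2) / (b * ω)) * (1 - Real.exp (-ω * t)) *
          sSup ((fun s => ‖f s‖ ^ 2) '' Icc (0 : ℝ) t) := by
  subst hE
  have hbdd : BddAbove ((fun s => ‖f s‖ ^ 2) '' Icc 0 T) :=
    isCompact_Icc.bddAbove_image (hf.norm.pow 2)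
  exact stmt9_general hc₁ hB hγ₁ (Ioc_subset_Icc_self hγ) hbdd
    (isDampedWaveOn_of_symmetric hBsym hv hv' heq) hb hω
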